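/- Let H be a 1-regular hypergraph (every vertex belongs to exactly one edge; edges of size 1 allowed). Then H is (Z₂×Z₂)-cordial if and only if either at least one of |H| and ‖H‖ is odd, or both are even and |H| ≡ ‖H‖ (mod 4). -/

import Mathlib

/-!
For a labeling `c`, only two multisets matter: the vertex labels and the edge labels.  By
1-regularity they have the same sum.

*Necessity.*  A balanced multiset over `Z₂ × Z₂` of even size has sum `0` exactly when its size
is divisible by `4` (`LabelBalanced.sum_eq_zero_iff`).  Hence if both numbers are even, they are
congruent modulo `4`.

*Sufficiency.*  Since the edges are pairwise disjoint, one may choose freely, for every edge, the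
multiset of labels it receives (`exists_labeling`), so only the multiset of edge sizes matters
(`Realizable`).  Sizes are reduced in two ways, both preserving the two numbers modulo `4`:

* an edge of size at least `5` loses four vertices, which get the four different labels;
* among seven edges of size at most `4` the Erdős–Ginzburg–Ziv theorem finds four whose sizes
  sum to a multiple of `4`; these admit a labeling in which all vertex labels occur equally often
  and all edge labels occur exactly once, so they can be split off (`Realizable.add_block`).

At most six edges of sizes `1, …, 4` remain, and these finitely many cases (among them the
four-edge blocks) are settled by a verified search (`searchLabels_spec`).
-/

open Finset

open Finset

/-- The Klein four-group `Z₂ × Z₂`. -/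
abbrev K4 : Type := ZMod 2 × ZMod 2

/-- The edge label induced by a vertex labeling: the sum of the labels of the
vertices of the edge. -/
def edgeSum {V : Type*} (c : V → K4) (e : Finset V) : K4 :=
  ∑ v ∈ e, c v

/-- A labeling `c` of the vertex set `Vs` is `Z₂×Z₂`-friendly if any two label
classes differ in size by at most one. -/
def Friendly {V : Type*} [DecidableEq V] (Vs : Finset V) (c : V → K4) : Prop :=
  ∀ a b : K4,
    |((Vs.filter fun v => c v = a).card : ℤ) -
      ((Vs.filter fun v => c v = b).card : ℤ)| ≤ 1

/-- A hypergraph with vertex set `Vs` and edge set `E` is `Z₂×Z₂`-cordial if it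
admits a `Z₂×Z₂`-friendly vertex labeling whose induced edge label classes
differ in size by at most one. -/
def Cordial {V : Type*} [DecidableEq V] (Vs : Finset V) (E : Finset (Finset V)) : Prop :=
  ∃ c : V → K4, Friendly Vs c ∧
    ∀ a b : K4,
      |((E.filter fun e => edgeSum c e = a).card : ℤ) -
        ((E.filter fun e => edgeSum c e = b).card : ℤ)| ≤ 1

/-! ### LabelBalanced multisets of labels -/

/-- The multiplicities of any two labels in `M` differ by at most one. -/
def LabelBalanced (M : Multiset K4) : Prop := ∀ a b : K4, M.count a ≤ M.count b + 1

instance (M : Multiset K4) : Decidable (LabelBalanced M) := by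
  unfold LabelBalanced; infer_instance

lemma card_eq_counts (M : Multiset K4) :
    M.card = M.count (0, 0) + M.count (0, 1) + M.count (1, 0) + M.count (1, 1) := by
  rw [← Multiset.sum_count_eq_card (s := Finset.univ) (m := M) (fun a _ => Finset.mem_univ a),
    Fintype.sum_prod_type]
  simp only [show (Finset.univ : Finset (ZMod 2)) = {0, 1} from rfl]
  simp [add_assoc]

lemma sum_eq_counts (M : Multiset K4) :
    M.sum = (((M.count (1, 0) + M.count (1, 1) : ℕ) : ZMod 2),
      ((M.count (0, 1) + M.count (1, 1) : ℕ) : ZMod 2)) := by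
  induction M using Multiset.induction_on with
  | empty => rfl
  | cons a M ih =>
    rw [Multiset.sum_cons, ih]
    have h : ∀ x : K4, x = (0, 0) ∨ x = (0, 1) ∨ x = (1, 0) ∨ x = (1, 1) := by decide
    rcases h a with rfl | rfl | rfl | rfl <;>
      refine Prod.ext ?_ ?_ <;> simp <;> ring

lemma LabelBalanced.sum_eq_zero_iff {M : Multiset K4} (h : LabelBalanced M)
    (h2 : M.card % 2 = 0) :
    M.sum = 0 ↔ M.card % 4 = 0 := by
  rw [sum_eq_counts, Prod.mk_eq_zero, ZMod.natCast_eq_zero_iff, ZMod.natCast_eq_zero_iff]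
  have hc := card_eq_counts M
  have h1 := h (0, 0) (0, 1)
  have h2 := h (0, 0) (1, 0)
  have h3 := h (0, 0) (1, 1)
  have h4 := h (0, 1) (0, 0)
  have h5 := h (0, 1) (1, 0)
  have h6 := h (0, 1) (1, 1)
  have h7 := h (1, 0) (0, 0)
  have h8 := h (1, 0) (0, 1)
  have h9 := h (1, 0) (1, 1)
  have h10 := h (1, 1) (0, 0)
  have h11 := h (1, 1) (0, 1)
  have h12 := h (1, 1) (1, 0)
  omega

/-- A balanced multiset whose size is a multiple of `4` contains all labels equally often. -/
lemma LabelBalanced.count_eq {M : Multiset K4} (h : LabelBalanced M)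
    (h4 : M.card % 4 = 0) (a b : K4) :
    M.count a = M.count b := by
  have hc := card_eq_counts M
  have key : ∀ x : K4, M.count x = M.count (0, 0) := by
    have h1 := h (0, 0) (0, 1)
    have h2 := h (0, 0) (1, 0)
    have h3 := h (0, 0) (1, 1)
    have h4 := h (0, 1) (0, 0)
    have h5 := h (0, 1) (1, 0)
    have h6 := h (0, 1) (1, 1)
    have h7 := h (1, 0) (0, 0)
    have h8 := h (1, 0) (0, 1)
    have h9 := h (1, 0) (1, 1)
    have h10 := h (1, 1) (0, 0)
    have h11 := h (1, 1) (0, 1)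
    have h12 := h (1, 1) (1, 0)
    intro x
    have hx : ∀ x : K4, x = (0, 0) ∨ x = (0, 1) ∨ x = (1, 0) ∨ x = (1, 1) := by decide
    rcases hx x with rfl | rfl | rfl | rfl <;> omega
  rw [key a, key b]

lemma LabelBalanced.add_left {M N : Multiset K4} (hN : LabelBalanced N) (hM : LabelBalanced M)
    (h4 : M.card % 4 = 0) : LabelBalanced (M + N) := by
  intro a b
  have := hM.count_eq h4 a b
  have := hN a b
  simp only [Multiset.count_add]
  omega

/-! ### Realizable multisets of edge sizes -/

/-- The multiset `S` of edge sizes is realizable if every edge can be given a multiset of labels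
of its size such that both the labels used altogether and the edge sums are balanced. -/
def Realizable (S : Multiset ℕ) : Prop :=
  ∃ T : Multiset (Multiset K4), T.map Multiset.card = S ∧ LabelBalanced T.join ∧
    LabelBalanced (T.map Multiset.sum)

/-- The arithmetic condition on the numbers of vertices and edges, in condensed form. -/
def SizeCond (n m : ℕ) : Prop := n % 2 = 1 ∨ m % 2 = 1 ∨ n % 4 = m % 4

instance (n m : ℕ) : Decidable (SizeCond n m) := by unfold SizeCond; infer_instance

lemma Realizable.add_block {S U : Multiset ℕ} (hS : Realizable S) (hU : Realizable U)
    (hcard : U.card % 4 = 0) (hsum : U.sum % 4 = 0) : Realizable (U + S) := by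
  obtain ⟨T, rfl, hT1, hT2⟩ := hS
  obtain ⟨W, rfl, hW1, hW2⟩ := hU
  refine ⟨W + T, by simp, ?_, ?_⟩
  · rw [Multiset.join_add]
    exact hT1.add_left hW1 (by rwa [Multiset.card_join])
  · rw [Multiset.map_add]
    exact hT2.add_left hW2 (by simpa using hcard)

/-- An edge may be enlarged by four vertices carrying the four different labels. -/
lemma Realizable.add_four {s : ℕ} {S : Multiset ℕ} (h : Realizable (s ::ₘ S)) :
    Realizable ((s + 4) ::ₘ S) := by
  obtain ⟨T, hT, h1, h2⟩ := h
  obtain ⟨t, ht, hts, hS⟩ := Multiset.map_eq_cons _ _ _ _ |>.2 hT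
  obtain ⟨T, rfl⟩ := Multiset.exists_cons_of_mem ht
  rw [Multiset.erase_cons_head] at hS
  have hu : (Finset.univ : Finset K4).val.card = 4 := rfl
  have hs0 : (Finset.univ : Finset K4).val.sum = 0 := by decide
  have hb : LabelBalanced (Finset.univ : Finset K4).val := by decide
  refine ⟨((Finset.univ : Finset K4).val + t) ::ₘ T, ?_, ?_, ?_⟩
  · rw [Multiset.map_cons, hS, Multiset.card_add, hu, hts, add_comm]
  · rw [Multiset.join_cons, add_assoc, ← Multiset.join_cons]
    exact h1.add_left hb (by rw [hu])
  · rwa [Multiset.map_cons, Multiset.sum_add, hs0, zero_add, ← Multiset.map_cons]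

/-! ### The search for at most six edges of size at most four -/

/-- The label words tried for an edge of the given size, the four labels being coded as
`0, 1, 2, 3` so that addition is bitwise xor.  The lists are incomplete; these words suffice and
in this order lead to little backtracking. -/
def candidates : ℕ → List (List ℕ)
  | 1 => [[2], [1], [0], [3]]
  | 2 => [[0, 1], [1, 2], [3, 3], [0, 2], [2, 3], [0, 0]]
  | 3 => [[2, 3, 3], [0, 1, 2], [0, 1, 1], [0, 0, 3], [0, 2, 3], [1, 1, 2]]
  | 4 => [[0, 1, 2, 3], [1, 2, 2, 3], [0, 0, 1, 3], [0, 0, 0, 3], [1, 1, 2, 3]]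
  | _ => []

/-- The label with code `i`, namely its two binary digits. -/
def labelCode (i : ℕ) : K4 := ((i / 2 : ℕ), (i : ℕ))

/-- Depth-first search for label words for the edge sizes in the list argument, where `vs` and
`es` collect the vertex and edge labels used so far, and every label is used at most `p` times
and at least `p - 1` times on vertices, and similarly with `q` on edges. -/
def search (p q : ℕ) : List ℕ → List ℕ → List ℕ → Option (List (List ℕ))
  | [], vs, es =>
      if (List.range 4).all (fun i => p ≤ vs.count i + 1 && q ≤ es.count i + 1) then some []
      else none
  | s :: ss, vs, es => (candidates s).findSome? fun w =>
      let x := w.foldl Nat.xor 0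
      if es.count x < q && (List.range 4).all (fun i => (w ++ vs).count i ≤ p) then
        (search p q ss (w ++ vs) (x :: es)).map (w :: ·)
      else none

/-- The result of the search for the list `S` of edge sizes, as words in `Z₂ × Z₂`; the empty
list if the search fails. -/
def searchLabels (S : List ℕ) : List (List K4) :=
  ((search ((S.sum + 3) / 4) ((S.length + 3) / 4) S [] []).getD []).map (·.map labelCode)

/-- `a` edges of size `1`, `b` of size `2`, `c` of size `3` and `d` of size `4`. -/
def sizeList (a b c d : ℕ) : List ℕ :=
  List.replicate d 4 ++ List.replicate c 3 ++ List.replicate b 2 ++ List.replicate a 1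

/-- The words in `L` have the lengths in `S`, and their letters as well as their sums are
balanced. -/
def GoodWords (S : List ℕ) (L : List (List K4)) : Prop :=
  L.map List.length = S ∧ LabelBalanced (Multiset.ofList L.flatten) ∧
    LabelBalanced (Multiset.ofList (L.map List.sum))

instance (S : List ℕ) (L : List (List K4)) : Decidable (GoodWords S L) := by
  unfold GoodWords; infer_instance

lemma searchLabels_spec : ∀ a < 7, ∀ b < 7 - a, ∀ c < 7 - a - b, ∀ d < 7 - a - b - c,
    SizeCond (sizeList a b c d).sum (sizeList a b c d).length →
      GoodWords (sizeList a b c d) (searchLabels (sizeList a b c d)) := by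
  decide +kernel

lemma eq_sizeList (S : Multiset ℕ) (h1 : ∀ s ∈ S, 1 ≤ s) (h4 : ∀ s ∈ S, s ≤ 4) :
    S = (sizeList (S.count 1) (S.count 2) (S.count 3) (S.count 4) : List ℕ) := by
  ext s
  simp only [sizeList, Multiset.coe_count, List.count_append, List.count_replicate]
  by_cases hs : s ∈ S
  · have := h1 s hs
    have := h4 s hs
    interval_cases s <;> simp
  · have h0 := Multiset.count_eq_zero_of_notMem hs
    rw [h0]
    split_ifs <;> simp_all

lemma realizable_small (S : Multiset ℕ) (h1 : ∀ s ∈ S, 1 ≤ s) (h4 : ∀ s ∈ S, s ≤ 4)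
    (hcard : S.card ≤ 6) (hc : SizeCond S.sum S.card) : Realizable S := by
  have hS := eq_sizeList S h1 h4
  generalize S.count 1 = a at hS
  generalize S.count 2 = b at hS
  generalize S.count 3 = c at hS
  generalize S.count 4 = d at hS
  subst hS
  have hl : (sizeList a b c d).length = d + c + b + a := by simp [sizeList, add_assoc]
  rw [Multiset.coe_card] at hcard
  obtain ⟨e1, e2, e3⟩ := searchLabels_spec a (by omega) b (by omega) c (by omega) d (by omega)
    (by simpa using hc)
  generalize searchLabels (sizeList a b c d) = L at e1 e2 e3
  refine ⟨Multiset.ofList (L.map Multiset.ofList), ?_, ?_, ?_⟩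
  · rw [← e1, Multiset.map_coe, List.map_map]
    rfl
  · rw [Multiset.coe_join]
    exact e2
  · rw [Multiset.map_coe, List.map_map]
    have : (Multiset.sum ∘ Multiset.ofList : List K4 → K4) = List.sum := by
      funext l; simp
    rw [this]
    exact e3

theorem realizable_of_sizeCond (S : Multiset ℕ) (h1 : ∀ s ∈ S, 1 ≤ s)
    (hc : SizeCond S.sum S.card) : Realizable S := by
  induction hn : S.sum using Nat.strong_induction_on generalizing S with
  | _ n ih =>
  subst hn
  by_cases h4 : ∀ s ∈ S, s ≤ 4
  · by_cases hcard : S.card ≤ 6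
    · exact realizable_small S h1 h4 hcard hc
    · obtain ⟨t, ht, htc, hts⟩ := Int.erdos_ginzburg_ziv_multiset (n := 4)
        (S.map (fun s : ℕ => (s : ℤ))) (by rw [Multiset.card_map]; omega)
      -- The block found by Erdős–Ginzburg–Ziv, read back as a submultiset of `S`.
      obtain ⟨U, hU, rfl⟩ : ∃ U ≤ S, U.map (fun s : ℕ => (s : ℤ)) = t := by
        refine ⟨t.map Int.toNat, ?_, ?_⟩
        · simpa [Multiset.map_map] using Multiset.map_le_map (f := Int.toNat) ht
        · rw [Multiset.map_map]
          conv_rhs => rw [← Multiset.map_id t]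
          refine Multiset.map_congr rfl fun x hx => ?_
          obtain ⟨s, -, rfl⟩ := Multiset.mem_map.1 (Multiset.mem_of_le ht hx)
          simp
      rw [Multiset.card_map] at htc
      have hUs : U.sum % 4 = 0 := by
        have : ((4 : ℕ) : ℤ) ∣ ((U.sum : ℕ) : ℤ) := by
          rw [Nat.cast_multiset_sum]
          exact hts
        omega
      obtain ⟨R, rfl⟩ := Multiset.le_iff_exists_add.1 hU
      have hpos : 0 < U.sum := by
        obtain ⟨s, hs⟩ := Multiset.card_pos_iff_exists_mem.1 (by omega : 0 < U.card)
        have := Multiset.single_le_sum (fun _ _ => Nat.zero_le _) s hs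
        have := h1 s (by simp [hs])
        omega
      rw [Multiset.sum_add, Multiset.card_add] at hc
      refine Realizable.add_block (ih R.sum (by rw [Multiset.sum_add]; omega) R
        (fun s hs => h1 s (by simp [hs])) (by unfold SizeCond at *; omega) rfl) ?_
        (by omega) hUs
      exact realizable_small U (fun s hs => h1 s (by simp [hs])) (fun s hs => h4 s (by simp [hs]))
        (by omega) (by unfold SizeCond; omega)
  · push Not at h4
    obtain ⟨s, hs, hs4⟩ := h4
    obtain ⟨R, rfl⟩ := Multiset.exists_cons_of_mem hs
    obtain ⟨k, rfl⟩ : ∃ k, s = k + 4 := ⟨s - 4, by omega⟩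
    apply Realizable.add_four
    simp only [Multiset.sum_cons, Multiset.card_cons] at hc
    refine ih (k ::ₘ R).sum (by simp) _ ?_ ?_ rfl
    · intro x hx
      rcases Multiset.mem_cons.1 hx with rfl | hx
      · omega
      · exact h1 x (by simp [hx])
    · simp only [Multiset.sum_cons, Multiset.card_cons]
      unfold SizeCond at *
      omega

/-! ### From multisets to labelings -/

lemma exists_map_eq {V : Type*} [DecidableEq V] (e : Finset V) (t : Multiset K4)
    (h : t.card = e.card) : ∃ c : V → K4, e.val.map c = t := by
  induction e using Finset.induction_on generalizing t with
  | empty => exact ⟨0, by simpa [eq_comm] using Multiset.card_eq_zero.1 h⟩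
  | insert v e hv ih =>
    rw [Finset.card_insert_of_notMem hv] at h
    obtain ⟨a, ha⟩ := Multiset.card_pos_iff_exists_mem.1 (by omega : 0 < t.card)
    obtain ⟨t, rfl⟩ := Multiset.exists_cons_of_mem ha
    obtain ⟨c, hc⟩ := ih t (by simpa using h)
    refine ⟨Function.update c v a, ?_⟩
    rw [Finset.insert_val_of_notMem hv, Multiset.map_cons, Function.update_self, ← hc]
    congr 1
    refine Multiset.map_congr rfl fun x hx => Function.update_of_ne ?_ _ _
    rintro rfl
    exact hv hx

/-- If the edges are pairwise disjoint, every choice of label multisets of the right sizes comes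
from a vertex labeling. -/
lemma exists_labeling {V : Type*} [DecidableEq V] (E : Finset (Finset V))
    (hd : (E : Set (Finset V)).PairwiseDisjoint id) (T : Multiset (Multiset K4))
    (hT : T.map Multiset.card = E.val.map Finset.card) :
    ∃ c : V → K4, (E.biUnion id).val.map c = T.join ∧
      E.val.map (edgeSum c) = T.map Multiset.sum := by
  induction E using Finset.induction_on generalizing T with
  | empty =>
    have : T = 0 := by simpa using hT
    exact ⟨0, by simp [this]⟩
  | insert e E he ih =>
    rw [Finset.insert_val_of_notMem he, Multiset.map_cons] at hT
    obtain ⟨t, ht, hte, hT'⟩ := Multiset.map_eq_cons _ _ _ _ |>.2 hT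
    obtain ⟨T, rfl⟩ := Multiset.exists_cons_of_mem ht
    rw [Multiset.erase_cons_head] at hT'
    obtain ⟨c, hc1, hc2⟩ := ih (hd.subset (by simp)) T hT'
    obtain ⟨c₀, hc₀⟩ := exists_map_eq e t hte
    have hdis : ∀ f ∈ E, Disjoint e f := fun f hf =>
      hd (by simp) (by simp [hf]) (by rintro rfl; exact he hf)
    have hdU : Disjoint e (E.biUnion id) := by
      rw [Finset.disjoint_biUnion_right]
      exact hdis
    set c' : V → K4 := fun v => if v ∈ e then c₀ v else c v with hc'
    have hin : e.val.map c' = t := by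
      rw [← hc₀]
      exact Multiset.map_congr rfl fun v hv => if_pos hv
    have hout : ∀ f : Finset V, Disjoint e f → f.val.map c' = f.val.map c := fun f hf =>
      Multiset.map_congr rfl fun v hv => if_neg (Finset.disjoint_right.1 hf hv)
    refine ⟨c', ?_, ?_⟩
    · rw [Finset.biUnion_insert, id, ← Finset.disjUnion_eq_union _ _ hdU, Finset.disjUnion_val,
        Multiset.map_add, hin, hout _ hdU, hc1, Multiset.join_cons]
    · rw [Finset.insert_val_of_notMem he, Multiset.map_cons, Multiset.map_cons, ← hc2]
      congr 1
      · rw [← hin]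
        rfl
      · refine Multiset.map_congr rfl fun f hf => ?_
        change (f.val.map c').sum = (f.val.map c).sum
        rw [hout f (hdis f hf)]

lemma balanced_map_iff {α : Type*} (s : Finset α) (f : α → K4) :
    LabelBalanced (s.val.map f) ↔ ∀ a b : K4, |((s.filter fun v => f v = a).card : ℤ) -
      ((s.filter fun v => f v = b).card : ℤ)| ≤ 1 := by
  have h : ∀ a, (s.val.map f).count a = (s.filter fun v => f v = a).card := by
    intro a
    rw [Multiset.count_map]
    simp only [eq_comm (a := a)]
    rfl
  constructor
  · intro hb a b
    have h1 := hb a b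
    have h2 := hb b a
    rw [h, h] at h1 h2
    rw [abs_le]
    constructor <;> omega
  · intro hb a b
    have := (abs_le.1 (hb a b)).2
    rw [h, h]
    omega

/-- Let `H` be a 1-regular hypergraph: every vertex belongs to exactly one
edge (edges nonempty, possibly of size 1).  Then `H` is `Z₂×Z₂`-cordial if and
only if at least one of the number of vertices and the number of edges is odd,
or both are even and they are congruent modulo 4. -/
theorem one_regular_cordial_iff {V : Type*} [DecidableEq V] (Vs : Finset V)
    (E : Finset (Finset V))
    (hsub : ∀ e ∈ E, e ⊆ Vs)
    (hne : ∀ e ∈ E, e.Nonempty)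
    (hreg : ∀ v ∈ Vs, ∃! e, e ∈ E ∧ v ∈ e) :
    Cordial Vs E ↔
      (Vs.card % 2 = 1 ∨ E.card % 2 = 1 ∨
        (Vs.card % 2 = 0 ∧ E.card % 2 = 0 ∧ Vs.card % 4 = E.card % 4)) := by
  have hd : (E : Set (Finset V)).PairwiseDisjoint id := by
    intro e he f hf hef
    rw [Function.onFun, id, id, Finset.disjoint_left]
    intro v hve hvf
    exact hef ((hreg v (hsub e he hve)).unique ⟨he, hve⟩ ⟨hf, hvf⟩)
  have hVs : Vs = E.biUnion id := by
    ext v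
    simp only [Finset.mem_biUnion, id]
    exact ⟨fun hv => (hreg v hv).exists, fun ⟨e, he, hve⟩ => hsub e he hve⟩
  constructor
  · rintro ⟨c, hV, hE⟩
    have hV' := (balanced_map_iff Vs c).2 hV
    have hE' := (balanced_map_iff E (edgeSum c)).2 hE
    have hsum : (Vs.val.map c).sum = (E.val.map (edgeSum c)).sum := by
      change ∑ v ∈ Vs, c v = ∑ e ∈ E, edgeSum c e
      rw [hVs, Finset.sum_biUnion hd]
      rfl
    by_cases h1 : Vs.card % 2 = 1
    · exact Or.inl h1
    by_cases h2 : E.card % 2 = 1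
    · exact Or.inr (Or.inl h2)
    have e1 := hV'.sum_eq_zero_iff (by rw [Multiset.card_map, Finset.card_val]; omega)
    have e2 := hE'.sum_eq_zero_iff (by rw [Multiset.card_map, Finset.card_val]; omega)
    rw [Multiset.card_map, Finset.card_val] at e1 e2
    rw [hsum, e2] at e1
    omega
  · intro h
    have hn : (E.val.map Finset.card).sum = Vs.card := by
      rw [hVs, Finset.card_biUnion hd]
      rfl
    obtain ⟨T, hT, hT1, hT2⟩ := realizable_of_sizeCond (E.val.map Finset.card)
      (by
        intro s hs
        obtain ⟨e, he, rfl⟩ := Multiset.mem_map.1 hs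
        exact (hne e he).card_pos)
      (by
        rw [hn, Multiset.card_map, Finset.card_val]
        unfold SizeCond
        omega)
    obtain ⟨c, hc1, hc2⟩ := exists_labeling E hd T hT
    rw [← hVs] at hc1
    rw [← hc1] at hT1
    rw [← hc2] at hT2
    exact ⟨c, (balanced_map_iff Vs c).1 hT1, (balanced_map_iff E (edgeSum c)).1 hT2⟩
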